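/- Let H be a complex Hilbert space with dim_ℂ H ≥ 2, and let S : H → H be a surjective ℝ-linear isometry (‖S(ψ)‖ = ‖ψ‖ for all ψ) that maps every complex line into a complex line (for every ξ ∈ H there exists α ∈ ℂ with S(iξ) = α·S(ξ)). Then S is either a unitary operator or an antiunitary operator on H. -/

import Mathlib

open scoped InnerProductSpace

/-- `S : H → H` is a unitary operator. -/
def IsUnitaryOp {H : Type*} [NormedAddCommGroup H] [InnerProductSpace ℂ H]
    (S : H → H) : Prop :=
  Function.Bijective S ∧
    (∀ ψ₁ ψ₂, S (ψ₁ + ψ₂) = S ψ₁ + S ψ₂) ∧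
    (∀ (c : ℂ) (ψ : H), S (c • ψ) = c • S ψ) ∧
    (∀ ψ₁ ψ₂, (⟪S ψ₁, S ψ₂⟫_ℂ) = ⟪ψ₁, ψ₂⟫_ℂ)

/-- `S : H → H` is an antiunitary operator: a bijective ℝ-linear map which is
conjugate-linear and conjugates inner products. -/
def IsAntiunitaryOp {H : Type*} [NormedAddCommGroup H] [InnerProductSpace ℂ H]
    (S : H → H) : Prop :=
  Function.Bijective S ∧
    (∀ ψ₁ ψ₂, S (ψ₁ + ψ₂) = S ψ₁ + S ψ₂) ∧
    (∀ (c : ℂ) (ψ : H), S (c • ψ) = (starRingEnd ℂ c) • S ψ) ∧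
    (∀ ψ₁ ψ₂, (⟪S ψ₁, S ψ₂⟫_ℂ) = starRingEnd ℂ (⟪ψ₁, ψ₂⟫_ℂ))

/-! For `ξ ≠ 0` write `S (I • ξ) = α • S ξ`. Since `S` preserves the norms of `ξ`, `I • ξ` and
`ξ + I • ξ`, the number `α` lies on the circles `‖z‖ = ‖I‖` and `‖1 + z‖ = ‖1 + I‖`, which meet
only in `I` and `-I`. The vectors with `α = I` and those with `α = -I` form two subgroups covering
the space, and a group is never the union of two proper subgroups, so one sign holds throughout.
Polarization then turns preservation of the norm into the statement on inner products. -/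

section

open Complex ComplexConjugate

theorem eq_or_eq_conj_of_norm_eq_of_norm_one_add_eq {z w : ℂ} (hnorm : ‖z‖ = ‖w‖)
    (hnorm_one_add : ‖1 + z‖ = ‖1 + w‖) : z = w ∨ z = conj w := by
  have hsq : z.re * z.re + z.im * z.im = w.re * w.re + w.im * w.im := by
    rw [← normSq_apply, ← normSq_apply, normSq_eq_norm_sq, normSq_eq_norm_sq, hnorm]
  have hsq_one_add : (1 + z.re) * (1 + z.re) + z.im * z.im =
      (1 + w.re) * (1 + w.re) + w.im * w.im := by
    have hnormSq : normSq (1 + z) = normSq (1 + w) := by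
      rw [normSq_eq_norm_sq, normSq_eq_norm_sq, hnorm_one_add]
    simpa [normSq_apply] using hnormSq
  have hre : z.re = w.re := by linarith
  have him : z.im * z.im = w.im * w.im := by rw [hre] at hsq; linarith
  exact (mul_self_eq_mul_self_iff.mp him).imp (Complex.ext hre) (Complex.ext hre)

theorem addMonoidHom_eq_or_eq_of_forall_eq_or_eq {G M : Type*} [AddGroup G] [AddMonoid M]
    {f g h : G →+ M} (hfgh : ∀ x, f x = g x ∨ f x = h x) : f = g ∨ f = h := by
  have hcover : ((⊤ : AddSubgroup G) : Set G) ⊆ f.eqLocus g ∪ f.eqLocus h := fun x _ => hfgh x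
  exact (AddSubgroupClass.subset_union.mp hcover).imp
    (fun hle => AddMonoidHom.ext fun x => hle (AddSubgroup.mem_top x))
    (fun hle => AddMonoidHom.ext fun x => hle (AddSubgroup.mem_top x))

theorem map_complex_smul_of_map_I_smul {E F : Type*} [AddCommGroup E] [Module ℂ E]
    [AddCommGroup F] [Module ℂ F] (σ : ℂ →ₐ[ℝ] ℂ) (T : E →ₗ[ℝ] F)
    (hT : ∀ x, T (I • x) = σ I • T x) (c : ℂ) (x : E) : T (c • x) = σ c • T x := by
  have hσ (r : ℝ) : σ r = r := σ.commutes r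
  rw [← re_add_im c]
  simp only [map_add, map_mul, hσ, add_smul, mul_smul, coe_smul, map_smul, hT]

theorem inner_map_map_of_conjLinearIsometry {𝕜 E F : Type*} [RCLike 𝕜]
    [SeminormedAddCommGroup E] [InnerProductSpace 𝕜 E]
    [SeminormedAddCommGroup F] [InnerProductSpace 𝕜 F]
    (U : E →ₛₗᵢ[starRingEnd 𝕜] F) (x y : E) : ⟪U x, U y⟫_𝕜 = conj ⟪x, y⟫_𝕜 := by
  have hsub : ‖U x - (RCLike.I : 𝕜) • U y‖ = ‖x + (RCLike.I : 𝕜) • y‖ := by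
    rw [← U.norm_map (x + _), map_add, map_smulₛₗ, RCLike.conj_I, neg_smul, sub_eq_add_neg]
  have hadd : ‖U x + (RCLike.I : 𝕜) • U y‖ = ‖x - (RCLike.I : 𝕜) • y‖ := by
    rw [← U.norm_map (x - _), map_sub, map_smulₛₗ, RCLike.conj_I, neg_smul, sub_neg_eq_add]
  rw [inner_eq_sum_norm_sq_div_four, inner_eq_sum_norm_sq_div_four, ← map_add, ← map_sub,
    U.norm_map, U.norm_map, hsub, hadd]
  simp only [map_div₀, map_add, map_sub, map_mul, map_pow, map_ofNat, RCLike.conj_ofReal,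
    RCLike.conj_I]
  ring

section LinePreserving

variable {E F : Type*} [SeminormedAddCommGroup E] [NormedSpace ℂ E]
  [NormedAddCommGroup F] [NormedSpace ℂ F] {S : E →ₗᵢ[ℝ] F}

theorem map_I_smul_eq_or_eq_of_map_I_smul_eq_smul {α : ℂ} {x : E} (hα : S (I • x) = α • S x) :
    S (I • x) = I • S x ∨ S (I • x) = conj I • S x := by
  rcases eq_or_ne (S x) 0 with hx | hx
  · left
    rw [hα, hx, smul_zero, smul_zero]
  have hx' : ‖S x‖ ≠ 0 := norm_ne_zero_iff.mpr hx
  have hnorm : ‖α‖ = ‖I‖ := by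
    refine mul_right_cancel₀ hx' ?_
    rw [← norm_smul, ← hα, S.norm_map, S.norm_map, norm_smul]
  have hnorm_one_add : ‖1 + α‖ = ‖1 + I‖ := by
    refine mul_right_cancel₀ hx' ?_
    rw [← norm_smul, add_smul, one_smul, ← hα, ← map_add, S.norm_map, S.norm_map, ← norm_smul,
      add_smul, one_smul]
  rw [hα]
  exact (eq_or_eq_conj_of_norm_eq_of_norm_one_add_eq hnorm hnorm_one_add).imp
    (congrArg (· • S x)) (congrArg (· • S x))

theorem forall_map_I_smul_eq_or_forall_map_I_smul_eq
    (hline : ∀ x, ∃ α : ℂ, S (I • x) = α • S x) :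
    (∀ x, S (I • x) = I • S x) ∨ ∀ x, S (I • x) = conj I • S x := by
  let smulHom (c : ℂ) : E →+ F := (DistribSMul.toAddMonoidHom F c).comp S.toLinearMap
  have hpointwise (x : E) : S (I • x) = I • S x ∨ S (I • x) = conj I • S x :=
    (hline x).elim fun _ hα => map_I_smul_eq_or_eq_of_map_I_smul_eq_smul hα
  exact (addMonoidHom_eq_or_eq_of_forall_eq_or_eq
    (f := (S.toLinearMap : E →+ F).comp (DistribSMul.toAddMonoidHom E I))
    (g := smulHom I) (h := smulHom (conj I)) hpointwise).imp DFunLike.congr_fun DFunLike.congr_fun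

variable (S) in
theorem real_isometry_line_preserving_unitary_or_antiunitary_general
    (hline : ∀ x, ∃ α : ℂ, S (I • x) = α • S x) :
    (∃ U : E →ₗᵢ[ℂ] F, ⇑U = S) ∨ ∃ U : E →ₛₗᵢ[starRingEnd ℂ] F, ⇑U = S := by
  refine (forall_map_I_smul_eq_or_forall_map_I_smul_eq hline).imp (fun h => ?_) fun h => ?_
  · have hsmul := map_complex_smul_of_map_I_smul (AlgHom.id ℝ ℂ) S.toLinearMap h
    exact ⟨⟨⟨⟨S, map_add S⟩, hsmul⟩, S.norm_map⟩, rfl⟩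
  · have hsmul := map_complex_smul_of_map_I_smul (conjAe : ℂ →ₐ[ℝ] ℂ) S.toLinearMap h
    exact ⟨⟨⟨⟨S, map_add S⟩, hsmul⟩, S.norm_map⟩, rfl⟩

end LinePreserving

section Surjective

variable {H : Type*} [NormedAddCommGroup H] [InnerProductSpace ℂ H]

theorem isUnitaryOp_of_surjective (U : H →ₗᵢ[ℂ] H) (hU : Function.Surjective U) :
    IsUnitaryOp U :=
  ⟨⟨U.injective, hU⟩, map_add U, map_smul U, U.inner_map_map⟩

theorem isAntiunitaryOp_of_surjective (U : H →ₛₗᵢ[starRingEnd ℂ] H)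
    (hU : Function.Surjective U) : IsAntiunitaryOp U :=
  ⟨⟨U.injective, hU⟩, map_add U, map_smulₛₗ U, inner_map_map_of_conjLinearIsometry U⟩

end Surjective

end

/-- A surjective real-linear isometry of a complex Hilbert space of dimension at least 2
mapping complex lines into complex lines is unitary or antiunitary. -/
theorem real_isometry_line_preserving_unitary_or_antiunitary {H : Type*}
    [NormedAddCommGroup H] [InnerProductSpace ℂ H] [CompleteSpace H]
    (hdim : 2 ≤ Module.rank ℂ H) (S : H →ₗ[ℝ] H)
    (hsurj : Function.Surjective S) (hiso : ∀ ψ : H, ‖S ψ‖ = ‖ψ‖)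
    (hline : ∀ ξ : H, ∃ α : ℂ, S (Complex.I • ξ) = α • S ξ) :
    IsUnitaryOp (S : H → H) ∨ IsAntiunitaryOp (S : H → H) := by
  exact (real_isometry_line_preserving_unitary_or_antiunitary_general ⟨S, hiso⟩ hline).imp
    (fun ⟨U, hU⟩ => hU ▸ isUnitaryOp_of_surjective U (hU ▸ hsurj))
    (fun ⟨U, hU⟩ => hU ▸ isAntiunitaryOp_of_surjective U (hU ▸ hsurj))
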